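/- Carlson's theorem: if f is an entire function satisfying |f(z)| ≤ C·e^{α|z|} for all z (for some constants C and α < ∞), |f(iy)| ≤ C'·e^{β|y|} for all real y (for some β < π), and f(n) = 0 for every positive integer n, then f is identically zero. -/

import Mathlib

open Complex

lemma quadI (h : ℂ → ℂ) (M K A : ℝ)
    (hd : ∀ z : ℂ, 0 ≤ z.re → 0 ≤ z.im → DifferentiableAt ℂ h z)
    (hg : ∀ z : ℂ, 0 ≤ z.re → 0 ≤ z.im → ‖h z‖ ≤ K * Real.exp (A * ‖z‖))
    (hre : ∀ x : ℝ, 0 ≤ x → ‖h x‖ ≤ M) (him : ∀ x : ℝ, 0 ≤ x → ‖h (x * I)‖ ≤ M)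
    (z : ℂ) (h1 : 0 ≤ z.re) (h2 : 0 ≤ z.im) : ‖h z‖ ≤ M := by
  refine PhragmenLindelof.quadrant_I ?_ ⟨1, by norm_num, A, ?_⟩ hre him h1 h2
  · apply DifferentiableOn.diffContOnCl
    intro z hz
    rw [closure_reProdIm] at hz
    simp only [closure_Ioi, mem_reProdIm, Set.mem_Ici] at hz
    exact (hd z hz.1 hz.2).differentiableWithinAt
  · apply Asymptotics.IsBigO.of_bound K
    refine Filter.Eventually.filter_mono inf_le_right ?_
    rw [Filter.eventually_principal]
    intro z hz
    simp only [mem_reProdIm, Set.mem_Ioi] at hz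
    simpa using hg z hz.1.le hz.2.le

lemma exp_growth (F : ℂ → ℂ) (K A : ℝ) (hK : 0 ≤ K) (hA : 0 ≤ A)
    (hg : ∀ z : ℂ, 0 ≤ z.re → ‖F z‖ ≤ K * Real.exp (A * ‖z‖)) (u a w : ℂ)
    (hu : 0 ≤ (u * w).re) :
    ‖F (u * w) * exp (a * w)‖ ≤ K * Real.exp ((A * ‖u‖ + ‖a‖) * ‖w‖) := by
  have h1 := hg _ hu
  rw [norm_mul u w] at h1
  rw [norm_mul]
  have h2 : ‖exp (a * w)‖ ≤ Real.exp (‖a‖ * ‖w‖) := by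
    rw [norm_exp]
    gcongr
    exact (re_le_norm _).trans (norm_mul _ _).le
  calc _ ≤ (K * Real.exp (A * (‖u‖ * ‖w‖))) * Real.exp (‖a‖ * ‖w‖) := by gcongr
    _ = _ := by rw [mul_assoc, ← Real.exp_add]; ring_nf

/-- Phragmen-Lindelof in the image of the first quadrant under multiplication by `u`. -/
lemma quadU (F : ℂ → ℂ) (M K A : ℝ) (hK : 0 ≤ K) (hA : 0 ≤ A)
    (hd : ∀ z : ℂ, 0 ≤ z.re → DifferentiableAt ℂ F z)
    (hg : ∀ z : ℂ, 0 ≤ z.re → ‖F z‖ ≤ K * Real.exp (A * ‖z‖)) (u a : ℂ)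
    (hu1 : 0 ≤ u.re) (hu2 : u.im ≤ 0)
    (hre : ∀ x : ℝ, 0 ≤ x → ‖F (u * x)‖ ≤ M * Real.exp (-(a.re * x)))
    (him : ∀ x : ℝ, 0 ≤ x → ‖F (u * (x * I))‖ ≤ M * Real.exp (a.im * x))
    (w : ℂ) (h1 : 0 ≤ w.re) (h2 : 0 ≤ w.im) :
    ‖F (u * w)‖ ≤ M * Real.exp (-(a * w).re) := by
  have hpos : ∀ w : ℂ, 0 ≤ w.re → 0 ≤ w.im → 0 ≤ (u * w).re := by
    intro w h1 h2
    rw [mul_re]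
    nlinarith
  have key := quadI (fun w => F (u * w) * exp (a * w)) M K (A * ‖u‖ + ‖a‖) ?_ ?_ ?_ ?_ w h1 h2
  · simp only [norm_mul, norm_exp] at key
    rw [Real.exp_neg, ← div_eq_mul_inv, le_div_iff₀ (Real.exp_pos _)]
    exact key
  · intro z hz1 hz2
    exact (DifferentiableAt.comp (g := F) (f := fun z => u * z) z (hd (u * z) (hpos z hz1 hz2)) (by fun_prop)).mul (by fun_prop)
  · intro z hz1 hz2
    exact exp_growth F K A hK hA hg u a z (hpos z hz1 hz2)
  · intro x hx
    have := hre x hx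
    rw [Real.exp_neg, ← div_eq_mul_inv, le_div_iff₀ (Real.exp_pos _)] at this
    simpa [norm_exp] using this
  · intro x hx
    have := him x hx
    rw [← neg_neg (a.im * x), Real.exp_neg, ← div_eq_mul_inv, le_div_iff₀ (Real.exp_pos _)] at this
    simpa [norm_exp] using this

lemma halfA (F : ℂ → ℂ) (M K A B δ : ℝ) (hK : 0 ≤ K) (hA : 0 ≤ A)
    (hd : ∀ z : ℂ, 0 ≤ z.re → DifferentiableAt ℂ F z)
    (hg : ∀ z : ℂ, 0 ≤ z.re → ‖F z‖ ≤ K * Real.exp (A * ‖z‖))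
    (him : ∀ y : ℝ, ‖F (y * I)‖ ≤ M * Real.exp (-(δ * |y|)))
    (hre : ∀ x : ℝ, 0 ≤ x → ‖F x‖ ≤ M * Real.exp (B * x)) (x : ℝ) (hx : 0 ≤ x) :
    ‖F x‖ ≤ M * Real.exp ((B - δ) * x) := by
  have q1 : ∀ t : ℝ, 0 ≤ t → ‖F (t + t * I)‖ ≤ M * Real.exp ((B - δ) * t) := by
    intro t ht
    have := quadU F M K A hK hA hd hg 1 (-B - δ * I) (by simp) (by simp) ?_ ?_ (t + t * I)
      (by simpa) (by simpa)
    · rw [one_mul] at this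
      convert this using 3
      simp; ring
    · intro x hx
      simpa using hre x hx
    · intro x hx
      simpa [abs_of_nonneg hx] using him x
  have q2 : ∀ t : ℝ, 0 ≤ t → ‖F (t - t * I)‖ ≤ M * Real.exp ((B - δ) * t) := by
    intro t ht
    have := quadU F M K A hK hA hd hg (-I) (δ + B * I) (by simp) (by simp) ?_ ?_ (t + t * I)
      (by simpa) (by simpa)
    · convert this using 3
      · ring_nf; simp; ring
      · simp; ring
    · intro x hx
      have h := him (-x)
      rw [abs_neg, abs_of_nonneg hx] at h
      convert h using 3
      · push_cast; ring
      · simp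
    · intro x hx
      convert hre x hx using 3
      · ring_nf; simp
      · simp
  have := quadU F M K A hK hA hd hg (1 - I) (-(B - δ) + -(B - δ) * (-I)) (by simp) (by simp)
    ?_ ?_ ((x/2 : ℝ) + (x/2 : ℝ) * I) (by simp; linarith) (by simp; linarith)
  · convert this using 3
    · push_cast; ring_nf; simp; ring
    · simp; ring
  · intro t ht
    convert q2 t ht using 3
    · ring
    · simp; ring
  · intro t ht
    convert q1 t ht using 3
    · ring_nf; simp
    · simp

lemma halfZero (F : ℂ → ℂ) (M K A δ : ℝ) (hK : 0 ≤ K) (hA : 0 ≤ A) (hδ : 0 < δ)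
    (hd : ∀ z : ℂ, 0 ≤ z.re → DifferentiableAt ℂ F z)
    (hg : ∀ z : ℂ, 0 ≤ z.re → ‖F z‖ ≤ K * Real.exp (A * ‖z‖))
    (him : ∀ y : ℝ, ‖F (y * I)‖ ≤ M * Real.exp (-(δ * |y|))) (x : ℝ) (hx : 0 < x) :
    F x = 0 := by
  have key : ∀ n : ℕ, ∀ x : ℝ, 0 ≤ x → ‖F x‖ ≤ max M K * Real.exp ((A - n * δ) * x) := by
    intro n
    induction n with
    | zero =>
      intro x hx
      have := hg x (by simpa)
      simp only [norm_real, Real.norm_eq_abs, abs_of_nonneg hx] at this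
      simp only [Nat.cast_zero, zero_mul, sub_zero]
      exact this.trans (by gcongr; exact le_max_right _ _)
    | succ n ih =>
      intro x hx
      have := halfA F (max M K) K A _ δ hK hA hd hg
        (fun y => (him y).trans (by gcongr; exact le_max_left _ _)) ih x hx
      convert this using 4
      push_cast; ring
  have hlim : Filter.Tendsto (fun n : ℕ => max M K * Real.exp ((A - n * δ) * x)) Filter.atTop
      (nhds (max M K * 0)) := by
    refine Filter.Tendsto.const_mul _ (Real.tendsto_exp_atBot.comp ?_)
    refine Filter.Tendsto.atBot_mul_const hx ?_
    refine Filter.tendsto_atBot_add_const_left _ A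
      (Filter.tendsto_neg_atTop_atBot.comp (tendsto_natCast_atTop_atTop.atTop_mul_const hδ))
  rw [mul_zero] at hlim
  have := ge_of_tendsto' hlim (fun n => key n x hx.le)
  exact norm_le_zero_iff.1 this

/-- quotient of `g` by `s` with removable singularities filled in -/
noncomputable def quo (g s : ℂ → ℂ) (z : ℂ) : ℂ :=
  if s z = 0 then deriv g z / deriv s z else g z / s z

lemma quo_diff (g s : ℂ → ℂ) (hg : Differentiable ℂ g) (hs : Differentiable ℂ s) (c : ℂ)
    (h : s c = 0 → g c = 0 ∧ deriv s c ≠ 0) : DifferentiableAt ℂ (quo g s) c := by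
  by_cases hc : s c = 0
  · obtain ⟨h1, h2⟩ := h hc
    have d1 : Differentiable ℂ (dslope g c) := by
      rw [← differentiableOn_univ] at *
      exact (differentiableOn_dslope Filter.univ_mem).2 hg
    have d2 : Differentiable ℂ (dslope s c) := by
      rw [← differentiableOn_univ] at *
      exact (differentiableOn_dslope Filter.univ_mem).2 hs
    have h3 : dslope s c c ≠ 0 := by rwa [dslope_same]
    have : DifferentiableAt ℂ (fun z => dslope g c z / dslope s c z) c := (d1 c).div (d2 c) h3
    refine this.congr_of_eventuallyEq ?_
    filter_upwards [d2.continuous.continuousAt.eventually_ne h3] with z hz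
    by_cases hzc : z = c
    · subst hzc
      simp [quo, hc]
    · have e1 := sub_smul_dslope g c z
      have e2 := sub_smul_dslope s c z
      rw [h1, sub_zero, smul_eq_mul] at e1
      rw [hc, sub_zero, smul_eq_mul] at e2
      have hz' : z - c ≠ 0 := sub_ne_zero.2 hzc
      rw [quo, if_neg (by rw [← e2]; exact mul_ne_zero hz' hz), ← e1, ← e2]
      field_simp
  · have : DifferentiableAt ℂ (fun z => g z / s z) c := (hg c).div (hs c) hc
    refine this.congr_of_eventuallyEq ?_
    filter_upwards [hs.continuous.continuousAt.eventually_ne hc] with z hz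
    rw [quo, if_neg hz]


lemma norm_sin_sq (a b : ℝ) : ‖sin (a + b * I)‖ ^ 2 = Real.sin a ^ 2 + Real.sinh b ^ 2 := by
  rw [sin_add_mul_I, ← ofReal_sin, ← ofReal_cosh, ← ofReal_cos, ← ofReal_sinh, ← normSq_eq_norm_sq,
    normSq_apply]
  simp only [add_re, mul_re, ofReal_re, ofReal_im, I_re, I_im, add_im, mul_im, mul_zero, mul_one,
    zero_mul, sub_zero, add_zero, zero_add]
  have h1 := Real.sin_sq_add_cos_sq a
  have h2 := Real.cosh_sq b
  linear_combination (Real.sin a ^ 2) * h2 + (Real.sinh b ^ 2) * h1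

lemma sin_lower (w : ℂ) (n : ℤ) (h : |w.re - n| ≤ 1/2) :
    2 * ‖w - n‖ ≤ ‖sin (Real.pi * w)‖ := by
  have hpi := Real.pi_pos
  have e : (Real.pi * w : ℂ) = ((Real.pi * w.re : ℝ) : ℂ) + ((Real.pi * w.im : ℝ) : ℂ) * I := by
    conv_lhs => rw [← re_add_im w]
    push_cast; ring
  have h1 : Real.sin (Real.pi * w.re) ^ 2 = Real.sin (Real.pi * |w.re - n|) ^ 2 := by
    have : Real.sin (Real.pi * |w.re - n|) ^ 2 = Real.sin (Real.pi * (w.re - n)) ^ 2 := by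
      rcases abs_choice (w.re - n) with h | h <;> rw [h]
      rw [mul_neg, Real.sin_neg, neg_sq]
    rw [this, mul_sub, mul_comm Real.pi (n : ℝ), Real.sin_sub_int_mul_pi, mul_pow]
    rcases Int.even_or_odd n with hn | hn
    · simp [hn.neg_one_zpow]
    · simp [hn.neg_one_zpow]
  have h2 : 2 * |w.re - n| ≤ Real.sin (Real.pi * |w.re - n|) := by
    have := Real.mul_le_sin (x := Real.pi * |w.re - n|) (by positivity) (by nlinarith)
    convert this using 1
    field_simp
  have h3 : (2 * w.im) ^ 2 ≤ Real.sinh (Real.pi * w.im) ^ 2 := by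
    rw [← sq_abs, ← sq_abs (Real.sinh _), Real.abs_sinh, abs_mul, abs_mul]
    have : |Real.pi| * |w.im| ≤ Real.sinh (|Real.pi| * |w.im|) :=
      Real.self_le_sinh_iff.2 (by positivity)
    have h4 : |(2:ℝ)| * |w.im| ≤ |Real.pi| * |w.im| := by
      gcongr
      exact Real.two_le_pi
    gcongr
    linarith
  refine le_of_sq_le_sq ?_ (norm_nonneg _)
  rw [e, norm_sin_sq, h1, mul_pow, ← normSq_eq_norm_sq, normSq_apply]
  simp
  have h5 : (2 * |w.re - n|) ^ 2 ≤ Real.sin (Real.pi * |w.re - n|) ^ 2 := by gcongr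
  rw [mul_pow, sq_abs] at h5
  nlinarith

lemma sin_imag_lower (y : ℝ) (hy : 1 ≤ |y|) :
    Real.exp (Real.pi * |y|) / 4 ≤ ‖sin (Real.pi * (y * I))‖ := by
  have e : sin (Real.pi * (y * I)) = ((Real.sinh (Real.pi * y) : ℝ) : ℂ) * I := by
    rw [← mul_assoc, sin_mul_I]; push_cast; rfl
  rw [e, norm_mul, norm_I, mul_one, norm_real, Real.norm_eq_abs, Real.abs_sinh, abs_mul,
    abs_of_pos Real.pi_pos, Real.sinh_eq]
  have h3 := Real.pi_gt_three
  have h1 : (2:ℝ) ≤ Real.exp (Real.pi * |y|) := by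
    have := Real.add_one_le_exp (Real.pi * |y|)
    nlinarith
  have h2 : Real.exp (-(Real.pi * |y|)) ≤ 1 := by
    rw [Real.exp_le_one_iff]; nlinarith
  linarith

/-- Carlson's theorem. -/
theorem carlson_theorem (f : ℂ → ℂ) (hf : Differentiable ℂ f)
    (C C' α β : ℝ) (hC : 0 ≤ C) (hC' : 0 ≤ C') (hα : 0 ≤ α) (hβ : 0 ≤ β)
    (hβπ : β < Real.pi)
    (hgrowth : ∀ z : ℂ, ‖f z‖ ≤ C * Real.exp (α * ‖z‖))
    (hgrowth_im : ∀ y : ℝ, ‖f (Complex.I * y)‖ ≤ C' * Real.exp (β * |y|))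
    (hzero : ∀ n : ℕ, 0 < n → f n = 0) :
    ∀ z : ℂ, f z = 0 := by
  have hpi : (Real.pi : ℂ) ≠ 0 := by exact_mod_cast Real.pi_ne_zero
  set g : ℂ → ℂ := fun z => z * f z with hgdef
  set s : ℂ → ℂ := fun z => sin (Real.pi * z) with hsdef
  have hg : Differentiable ℂ g := differentiable_id.mul hf
  have hs : Differentiable ℂ s := by
    intro z; simp only [hsdef]; fun_prop
  have hs' : ∀ z, HasDerivAt s (cos (Real.pi * z) * Real.pi) z := by
    intro z
    have := (hasDerivAt_sin (Real.pi * z)).comp z ((hasDerivAt_id z).const_mul (Real.pi : ℂ))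
    rw [mul_one] at this
    exact this
  have hgn : ∀ n : ℤ, 0 ≤ n → g n = 0 := by
    intro n hn
    lift n to ℕ using hn
    rcases Nat.eq_zero_or_pos n with h | h
    · simp [hgdef, h]
    · simp [hgdef, hzero n h]
  have hd : ∀ z : ℂ, -1 < z.re → DifferentiableAt ℂ (quo g s) z := by
    intro z hz
    refine quo_diff g s hg hs z fun h0 => ?_
    have h0' : sin (Real.pi * z) = 0 := h0
    constructor
    · obtain ⟨k, hk⟩ := Complex.sin_eq_zero_iff.1 h0'
      have : z = k := by
        apply mul_left_cancel₀ hpi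
        rw [hk]; ring
      subst this
      apply hgn
      have : (-1 : ℝ) < (k : ℝ) := by simpa using hz
      have : (-1 : ℤ) < k := by exact_mod_cast this
      omega
    · rw [(hs' z).deriv]
      refine mul_ne_zero (fun h => ?_) hpi
      have := sin_sq_add_cos_sq (Real.pi * z)
      rw [h0', h] at this
      simp at this
  have hgb : ∀ w, ‖g w‖ ≤ C * Real.exp ((α + 1) * ‖w‖) := by
    intro w
    have h1 : ‖w‖ ≤ Real.exp ‖w‖ := by linarith [Real.add_one_le_exp ‖w‖]
    calc ‖g w‖ = ‖w‖ * ‖f w‖ := norm_mul _ _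
      _ ≤ Real.exp ‖w‖ * (C * Real.exp (α * ‖w‖)) := by gcongr; exact hgrowth w
      _ = C * Real.exp ((α + 1) * ‖w‖) := by rw [add_mul, Real.exp_add, one_mul]; ring
  have hquo : ∀ w, 1 ≤ ‖s w‖ → ‖quo g s w‖ ≤ C * Real.exp ((α + 1) * ‖w‖) := by
    intro w hw
    have : s w ≠ 0 := by
      intro h; rw [h, norm_zero] at hw; linarith
    rw [quo, if_neg this, norm_div]
    exact (div_le_self (norm_nonneg _) hw).trans (hgb w)
  set K := C * Real.exp (α + 1) with hKdef
  have hK : 0 ≤ K := by positivity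
  have hKe : ∀ t, C * Real.exp ((α + 1) * (t + 1)) = K * Real.exp ((α + 1) * t) := by
    intro t
    rw [hKdef, mul_assoc, ← Real.exp_add]; ring_nf
  have hgF : ∀ z : ℂ, 0 ≤ z.re → ‖quo g s z‖ ≤ K * Real.exp ((α + 1) * ‖z‖) := by
    intro z hz
    rw [← hKe]
    set n := round z.re with hn
    have hzn : |z.re - n| ≤ 1/2 := abs_sub_round _
    by_cases hb : 1/2 ≤ ‖z - n‖
    · refine (hquo z ?_).trans ?_
      · have := sin_lower z n hzn
        change 1 ≤ ‖sin (Real.pi * z)‖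
        linarith
      · gcongr; linarith
    · push Not at hb
      have hn0 : 0 ≤ n := by
        have h1 := abs_le.1 hzn
        have : (-1 : ℝ) < n := by linarith
        have : (-1 : ℤ) < n := by exact_mod_cast this
        omega
      have hn0' : (0 : ℝ) ≤ n := by exact_mod_cast hn0
      refine norm_le_of_forall_mem_frontier_norm_le (U := Metric.ball (n : ℂ) (1/2))
        Metric.isBounded_ball ?_ ?_ (subset_closure (by simpa [dist_eq] using hb))
      · apply DifferentiableOn.diffContOnCl
        intro w hw
        refine (hd w ?_).differentiableWithinAt
        have hw' := Metric.closure_ball_subset_closedBall hw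
        rw [Metric.mem_closedBall, dist_eq] at hw'
        have h1 := (abs_re_le_norm _).trans hw'
        simp at h1
        have := abs_le.1 h1
        linarith
      · intro w hw
        rw [frontier_ball _ (by norm_num), mem_sphere_iff_norm] at hw
        have h1 := (abs_re_le_norm _).trans hw.le
        simp only [sub_re, intCast_re] at h1
        refine (hquo w ?_).trans ?_
        · have := sin_lower w n h1
          change 1 ≤ ‖sin (Real.pi * w)‖
          linarith
        · have : ‖w‖ ≤ ‖z‖ + 1 := by
            have e : w = z + ((w - n) - (z - n)) := by ring
            calc ‖w‖ = ‖z + ((w - n) - (z - n))‖ := by rw [← e]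
              _ ≤ ‖z‖ + ‖(w - n) - (z - n)‖ := norm_add_le _ _
              _ ≤ ‖z‖ + (‖w - n‖ + ‖z - n‖) := by gcongr; exact norm_sub_le _ _
              _ ≤ _ := by linarith
          gcongr
  set δ := (Real.pi - β) / 2 with hδdef
  have hδ : 0 < δ := by rw [hδdef]; linarith
  have him : ∀ y : ℝ, ‖quo g s (y * I)‖ ≤
      max (K * Real.exp (α + 1 + δ)) (4 * C' / δ) * Real.exp (-(δ * |y|)) := by
    intro y
    rcases le_total |y| 1 with hy | hy
    · refine (hgF _ (by simp)).trans ?_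
      refine le_trans ?_ (mul_le_mul_of_nonneg_right
        (le_max_left (K * Real.exp (α + 1 + δ)) (4 * C' / δ)) (Real.exp_pos _).le)
      rw [mul_assoc K, ← Real.exp_add]
      have hn : ‖(y * I : ℂ)‖ = |y| := by simp
      rw [hn]
      refine mul_le_mul_of_nonneg_left (Real.exp_le_exp.2 ?_) hK
      nlinarith
    · refine le_trans ?_ (mul_le_mul_of_nonneg_right (le_max_right _ _) (Real.exp_pos _).le)
      have hl : Real.exp (Real.pi * |y|) / 4 ≤ ‖s (y * I)‖ := sin_imag_lower y hy
      have hl0 : 0 < Real.exp (Real.pi * |y|) / 4 := by positivity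
      have hne : s (y * I) ≠ 0 := by
        intro h; rw [h, norm_zero] at hl; linarith
      rw [quo, if_neg hne, norm_div]
      have hg1 : ‖g (y * I)‖ ≤ (Real.exp (δ * |y|) / δ) * (C' * Real.exp (β * |y|)) := by
        have e : g (y * I) = (y * I) * f (I * y) := by
          change (y * I) * f (y * I) = _
          rw [mul_comm I]
        rw [e, norm_mul]
        have h1 : ‖(y * I : ℂ)‖ ≤ Real.exp (δ * |y|) / δ := by
          rw [le_div_iff₀ hδ]
          simp only [norm_mul, norm_real, Real.norm_eq_abs, norm_I, mul_one]
          linarith [Real.add_one_le_exp (δ * |y|)]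
        gcongr
        exact hgrowth_im y
      calc ‖g (y * I)‖ / ‖s (y * I)‖
          ≤ (Real.exp (δ * |y|) / δ) * (C' * Real.exp (β * |y|)) / (Real.exp (Real.pi * |y|) / 4) := by
            gcongr
        _ = 4 * C' / δ * (Real.exp (δ * |y|) * Real.exp (β * |y|) / Real.exp (Real.pi * |y|)) := by
            field_simp
        _ = 4 * C' / δ * Real.exp (-(δ * |y|)) := by
            rw [← Real.exp_add, ← Real.exp_sub]
            congr 2
            rw [hδdef]; ring
  have hF0 := halfZero (quo g s) _ K (α + 1) δ hK (by linarith) hδ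
    (fun z hz => hd z (by linarith)) hgF him
  have hf0 : ∀ x : ℝ, 0 < x → x < 1 → f x = 0 := by
    intro x hx hx1
    have h := hF0 x hx
    have hsx : s x ≠ 0 := by
      have : 0 < Real.sin (Real.pi * x) :=
        Real.sin_pos_of_pos_of_lt_pi (by positivity) (by nlinarith [Real.pi_pos])
      change sin (Real.pi * x) ≠ 0
      exact_mod_cast this.ne'
    rw [quo, if_neg hsx, div_eq_zero_iff] at h
    rcases h with h | h
    · rcases mul_eq_zero.1 h with h | h
      · exact absurd (by exact_mod_cast h) hx.ne'
      · exact h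
    · exact absurd h hsx
  have hfan : AnalyticOnNhd ℂ f Set.univ := fun z _ => hf.analyticAt z
  have hz : f = fun _ => 0 := by
    refine hfan.eq_of_frequently_eq (z₀ := ((1/2 : ℝ) : ℂ)) (fun z _ => analyticAt_const) ?_
    have ht : Filter.Tendsto (fun x : ℝ => (x : ℂ)) (nhdsWithin (1/2 : ℝ) {1/2}ᶜ)
        (nhdsWithin ((1/2 : ℝ) : ℂ) {((1/2 : ℝ) : ℂ)}ᶜ) := by
      refine tendsto_nhdsWithin_iff.2 ⟨?_, ?_⟩
      · exact (continuous_ofReal.tendsto _).mono_left nhdsWithin_le_nhds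
      · filter_upwards [self_mem_nhdsWithin] with x hx h
        exact hx (ofReal_injective h)
    refine ht.frequently (Filter.Eventually.frequently ?_)
    have : Set.Ioo (0 : ℝ) 1 ∈ nhds (1/2 : ℝ) := Ioo_mem_nhds (by norm_num) (by norm_num)
    filter_upwards [nhdsWithin_le_nhds this] with x hx
    exact hf0 x hx.1 hx.2
  intro z
  rw [hz]
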